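/- arXiv:0909.0843 — 7 statements merged into one kernel-verified Lean document; each statement's English description precedes it below -/
import Mathlib

section
/- Let A and B be finite nonempty types and let p be a probability mass function on A × B × {1,2} (a discrete random vector (X1, X2, X3) with X3 binary). If X1 ⊥ X2 (marginal independence of the first two coordinates) and X1 ⊥ X2 | X3 (conditional independence of the first two coordinates given the third), then either X1 ⊥ (X2, X3) or X2 ⊥ (X1, X3). -/
/-- If `(X1, X2, X3)` is a discrete random vector with `X3` binary such that
`X1 ⊥ X2` and `X1 ⊥ X2 | X3`, then `X1 ⊥ (X2, X3)` or `X2 ⊥ (X1, X3)`. -/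
theorem marginal_and_conditional_indep_implies_joint_indep
    {A B : Type*} [Fintype A] [Fintype B] [Nonempty A] [Nonempty B]
    (p : A × B × Fin 2 → ℝ)
    (hp0 : ∀ s, 0 ≤ p s) (hp1 : ∑ s, p s = 1)
    -- X1 ⊥ X2 : p₁₂(a,b) = p₁(a) · p₂(b)
    (hmarg : ∀ a b, (∑ c, p (a, b, c))
        = (∑ b', ∑ c, p (a, b', c)) * (∑ a', ∑ c, p (a', b, c)))
    -- X1 ⊥ X2 | X3 : p₁₂₃(a,b,c) · p₃(c) = p₁₃(a,c) · p₂₃(b,c)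
    (hcond : ∀ a b c, p (a, b, c) * (∑ a', ∑ b', p (a', b', c))
        = (∑ b', p (a, b', c)) * (∑ a', p (a', b, c))) :
    -- X1 ⊥ (X2, X3) : p(a,b,c) = p₁(a) · p₂₃(b,c)
    (∀ a b c, p (a, b, c) = (∑ b', ∑ c', p (a, b', c')) * (∑ a', p (a', b, c)))
    -- or X2 ⊥ (X1, X3) : p(a,b,c) = p₂(b) · p₁₃(a,c)
    ∨ (∀ a b c, p (a, b, c) = (∑ a', ∑ c', p (a', b, c')) * (∑ b', p (a, b', c))) := by
  have hv : ∀ b c, (∑ a', ∑ b', p (a', b', c)) = 0 → ∑ a', p (a', b, c) = 0 := by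
    intro b c h
    rw [Finset.sum_comm] at h
    exact (Finset.sum_eq_zero_iff_of_nonneg
      (fun b' _ => Finset.sum_nonneg (fun a' _ => hp0 (a', b', c)))).1 h b (Finset.mem_univ b)
  have hu : ∀ a c, (∑ a', ∑ b', p (a', b', c)) = 0 → ∑ b', p (a, b', c) = 0 := by
    intro a c h
    exact (Finset.sum_eq_zero_iff_of_nonneg
      (fun a' _ => Finset.sum_nonneg (fun b' _ => hp0 (a', b', c)))).1 h a (Finset.mem_univ a)
  have hpz : ∀ a b c, (∑ a', ∑ b', p (a', b', c)) = 0 → p (a, b, c) = 0 := by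
    intro a b c h
    exact (Finset.sum_eq_zero_iff_of_nonneg
      (fun a' _ => hp0 (a', b, c))).1 (hv b c h) a (Finset.mem_univ a)
  have hw : (∑ a', ∑ b', p (a', b', 0)) + (∑ a', ∑ b', p (a', b', 1)) = 1 := by
    rw [← hp1]
    simp only [Fintype.sum_prod_type, Fin.sum_univ_two, Finset.sum_add_distrib]
  simp only [Fin.sum_univ_two, Finset.sum_add_distrib] at hmarg ⊢
  generalize hU : (fun a c => ∑ b', p (a, b', c)) = U at *
  generalize hV : (fun b c => ∑ a', p (a', b, c)) = V at *
  generalize hW : (fun c => ∑ a', ∑ b', p (a', b', c)) = W at *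
  have eU : ∀ a c, ∑ b', p (a, b', c) = U a c := fun a c => by rw [← hU]
  have eV : ∀ b c, ∑ a', p (a', b, c) = V b c := fun b c => by rw [← hV]
  have eW : ∀ c, ∑ a', ∑ b', p (a', b', c) = W c := fun c => by rw [← hW]
  simp only [eW] at hv hu hpz hw hcond
  simp only [eU, eV] at hv hu hmarg hcond ⊢
  have hDE : ∀ a b, (U a 0 * W 1 - U a 1 * W 0) * (V b 0 * W 1 - V b 1 * W 0) = 0 := by
    intro a b
    have h0 := hcond a b 0
    have h1 := hcond a b 1
    have hm := hmarg a b
    have e : W 1 = 1 - W 0 := by linarith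
    rw [e] at h1 ⊢
    linear_combination (W 0 * (1 - W 0)) * hm - (1 - W 0) * h0 - W 0 * h1
  by_cases hD : ∀ a, U a 0 * W 1 - U a 1 * W 0 = 0
  · left
    intro a b c
    by_cases h : W c = 0
    · rw [hpz a b c h, hv b c h, mul_zero]
    · apply mul_right_cancel₀ h
      rw [hcond a b c]
      have : U a c = W c * (U a 0 + U a 1) := by
        have := hD a
        have e : W 1 = 1 - W 0 := by linarith
        rw [e] at this
        match c with
        | 0 => linear_combination this
        | 1 => rw [e]; linear_combination -this
      rw [this]; ring
  · right
    push Not at hD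
    obtain ⟨a₀, ha₀⟩ := hD
    intro a b c
    by_cases h : W c = 0
    · rw [hpz a b c h, hu a c h, mul_zero]
    · apply mul_right_cancel₀ h
      rw [hcond a b c]
      have : V b c = W c * (V b 0 + V b 1) := by
        have := (mul_eq_zero.1 (hDE a₀ b)).resolve_left ha₀
        have e : W 1 = 1 - W 0 := by linarith
        rw [e] at this
        match c with
        | 0 => linear_combination this
        | 1 => rw [e]; linear_combination -this
      rw [this]; ring
end

section
/- Let τ be a finite index set and d_v ≥ 1 for v ∈ τ, and let p be a pmf on I_τ = ∏_{v∈τ} {1,…,d_v}. For any i ∈ I_τ, let σ = σ(i) = {v ∈ τ : i_v ≤ d_v − 1} (the coordinates of i not equal to the highest state d_v). Then p(i) = ∑_{α : σ ⊆ α ⊆ τ} (−1)^{|α∖σ|} ∑_{j ∈ J_{α∖σ}} q(j, i_σ), where (j, i_σ) denotes the element of J_α whose coordinates on α∖σ are given by j and whose coordinates on σ are given by i_σ. (Möbius inversion for saturated Möbius parameters, Lemma 7.) -/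
open Finset
open scoped Classical

/-- The saturated Möbius parameter of `A ⊆ τ` at the `A`-coordinates of `j`: the marginal
probability that the coordinates in `A` equal those of `j`.  (For `A = ∅` this equals `1`
for any pmf, matching the convention `q(j_∅) = 1`.) -/
noncomputable def satMobius {τ : Type*} [Fintype τ] {d : τ → ℕ}
    (p : (∀ v, Fin (d v)) → ℝ) (A : Finset τ) (j : ∀ v, Fin (d v)) : ℝ :=
  ∑ k ∈ Finset.univ.filter (fun k : ∀ v, Fin (d v) => ∀ v ∈ A, k v = j v), p k

/-- `σ(i)`: the set of coordinates of `i` that are not equal to the highest state.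
(States are `Fin (d v) = {0, …, d v − 1}`, the highest state being `d v − 1`; a coordinate
lies in the reduced range `[d v − 1]` iff `i v + 1 < d v`.) -/
noncomputable def sigmaOf {τ : Type*} [Fintype τ] (d : τ → ℕ)
    (i : ∀ v, Fin (d v)) : Finset τ :=
  Finset.univ.filter (fun v => (i v : ℕ) + 1 < d v)

/-- Lemma 7, Möbius inversion: for a pmf `p` on `I_τ` and any state `i`,
with `σ = σ(i)`,
`p(i) = ∑_{σ ⊆ α ⊆ τ} (−1)^{|α∖σ|} ∑_{j ∈ J_{α∖σ}} q(j, i_σ)`,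
where the inner sum ranges over full states `j` agreeing with `i` outside `α ∖ σ` and
taking reduced values on `α ∖ σ`. -/
theorem mobius_inversion {τ : Type*} [Fintype τ] (d : τ → ℕ) (hd : ∀ v, 1 ≤ d v)
    (p : (∀ v, Fin (d v)) → ℝ) (hp0 : ∀ i, 0 ≤ p i) (hp1 : ∑ i, p i = 1)
    (i : ∀ v, Fin (d v)) :
    p i = ∑ α ∈ Finset.univ.powerset.filter (fun α => sigmaOf d i ⊆ α),
      (-1 : ℝ) ^ ((α \ sigmaOf d i).card) *
        ∑ j ∈ Finset.univ.filter (fun j : ∀ v, Fin (d v) =>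
            (∀ v ∈ α \ sigmaOf d i, (j v : ℕ) + 1 < d v) ∧
            (∀ v ∉ α \ sigmaOf d i, j v = i v)),
          satMobius p α j := by
  set σ := sigmaOf d i with hσ
  have hmem : ∀ v, v ∈ σ ↔ (i v : ℕ) + 1 < d v := fun v => by simp [hσ, sigmaOf]
  have inner : ∀ α ∈ Finset.univ.powerset.filter (fun α => σ ⊆ α),
      (-1 : ℝ) ^ ((α \ σ).card) *
        ∑ j ∈ Finset.univ.filter (fun j : ∀ v, Fin (d v) =>
            (∀ v ∈ α \ σ, (j v : ℕ) + 1 < d v) ∧ (∀ v ∉ α \ σ, j v = i v)),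
          satMobius p α j =
      ∑ k ∈ Finset.univ.filter (fun k : ∀ v, Fin (d v) =>
          (∀ v ∈ σ, k v = i v) ∧ ∀ v ∈ α \ σ, (k v : ℕ) + 1 < d v),
        (-1 : ℝ) ^ ((α \ σ).card) * p k := by
    intro α hα
    have hα' : σ ⊆ α := (Finset.mem_filter.1 hα).2
    rw [← Finset.mul_sum]
    congr 1
    unfold satMobius
    rw [Finset.sum_comm' (t' := Finset.univ.filter (fun k : ∀ v, Fin (d v) =>
          (∀ v ∈ σ, k v = i v) ∧ ∀ v ∈ α \ σ, (k v : ℕ) + 1 < d v))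
        (s' := fun k => {fun v => if v ∈ α \ σ then k v else i v})]
    · simp
    · intro j k
      simp only [Finset.mem_filter, Finset.mem_univ, true_and, Finset.mem_singleton]
      constructor
      · rintro ⟨⟨h1, h2⟩, h3⟩
        refine ⟨?_, ?_, ?_⟩
        · funext v
          split_ifs with hv
          · exact (h3 v (Finset.mem_sdiff.1 hv).1).symm
          · exact h2 v hv
        · intro v hv
          rw [h3 v (hα' hv), h2 v (by simp [hv])]
        · intro v hv
          rw [h3 v (Finset.mem_sdiff.1 hv).1]
          exact h1 v hv
      · rintro ⟨rfl, h2, h3⟩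
        refine ⟨⟨?_, ?_⟩, ?_⟩
        · intro v hv
          simp only [if_pos hv]
          exact h3 v hv
        · intro v hv
          simp only [if_neg hv]
        · intro v hv
          by_cases hs : v ∈ σ
          · simp [hs, h2 v hs]
          · simp [hs, hv]
  rw [Finset.sum_congr rfl inner]
  rw [Finset.sum_comm' (t' := Finset.univ.filter (fun k : ∀ v, Fin (d v) => ∀ v ∈ σ, k v = i v))
      (s' := fun k => Finset.univ.powerset.filter
        (fun α => σ ⊆ α ∧ ∀ v ∈ α \ σ, (k v : ℕ) + 1 < d v))]
  · have key : ∀ k ∈ Finset.univ.filter (fun k : ∀ v, Fin (d v) => ∀ v ∈ σ, k v = i v),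
        ∑ α ∈ Finset.univ.powerset.filter
          (fun α => σ ⊆ α ∧ ∀ v ∈ α \ σ, (k v : ℕ) + 1 < d v),
          (-1 : ℝ) ^ ((α \ σ).card) * p k = if k = i then p k else 0 := by
      intro k hk
      have hk' : ∀ v ∈ σ, k v = i v := (Finset.mem_filter.1 hk).2
      rw [← Finset.sum_mul]
      set T : Finset τ := Finset.univ.filter (fun v => v ∉ σ ∧ (k v : ℕ) + 1 < d v) with hT
      have e : ∑ α ∈ Finset.univ.powerset.filter
          (fun α => σ ⊆ α ∧ ∀ v ∈ α \ σ, (k v : ℕ) + 1 < d v),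
          (-1 : ℝ) ^ ((α \ σ).card) = ∑ β ∈ T.powerset, (-1 : ℝ) ^ β.card := by
        refine Finset.sum_bij' (fun α _ => α \ σ) (fun β _ => β ∪ σ) ?_ ?_ ?_ ?_ ?_
        · intro α hα
          have h := (Finset.mem_filter.1 hα).2.2
          rw [Finset.mem_powerset]
          intro v hv
          exact Finset.mem_filter.2 ⟨Finset.mem_univ _, (Finset.mem_sdiff.1 hv).2, h v hv⟩
        · intro β hβ
          rw [Finset.mem_powerset] at hβ
          refine Finset.mem_filter.2 ⟨by simp, Finset.subset_union_right, ?_⟩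
          intro v hv
          simp only [Finset.mem_sdiff, Finset.mem_union] at hv
          have : v ∈ β := by tauto
          exact (Finset.mem_filter.1 (hβ this)).2.2
        · intro α hα
          exact Finset.sdiff_union_of_subset (Finset.mem_filter.1 hα).2.1
        · intro β hβ
          rw [Finset.mem_powerset] at hβ
          ext v
          have : v ∈ β → v ∉ σ := fun h => (Finset.mem_filter.1 (hβ h)).2.1
          simp only [Finset.mem_sdiff, Finset.mem_union]
          tauto
        · intro α hα
          rfl
      have e2 : ∑ β ∈ T.powerset, (-1 : ℝ) ^ β.card = if T = ∅ then 1 else 0 := by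
        have := congrArg (Int.cast : ℤ → ℝ) (Finset.sum_powerset_neg_one_pow_card (x := T))
        push_cast at this
        exact this
      have e3 : T = ∅ ↔ k = i := by
        constructor
        · intro h
          funext v
          by_cases hv : v ∈ σ
          · exact hk' v hv
          · have h1 : v ∉ T := by simp [h]
            have h2 : ¬ ((k v : ℕ) + 1 < d v) := fun h3 =>
              h1 (Finset.mem_filter.2 ⟨Finset.mem_univ _, hv, h3⟩)
            rw [hmem] at hv
            have := (k v).2
            have := (i v).2
            apply Fin.ext
            omega
        · rintro rfl
          rw [Finset.eq_empty_iff_forall_notMem]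
          intro v hv
          have h := (Finset.mem_filter.1 hv).2
          exact h.1 ((hmem v).2 h.2)
      rw [e, e2]
      simp only [e3]
      split_ifs <;> simp
    rw [Finset.sum_congr rfl key, Finset.sum_ite_eq_of_mem']
    simp
  · intro α k
    simp only [Finset.mem_filter, Finset.powerset_univ, Finset.mem_univ, true_and]
    tauto
end

section
/- Let τ be a finite index set and d_v ≥ 1 for v ∈ τ. If p and p' are two pmfs on I_τ = ∏_{v∈τ} {1,…,d_v} whose saturated Möbius parameters agree, i.e., q_p(j_σ) = q_{p'}(j_σ) for every σ ⊆ τ and every j_σ ∈ J_σ, then p = p'. (The linear map from the probability simplex to the saturated Möbius parameters is injective; part of Lemma 7.) -/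
open Finset
open scoped Classical

theorem satMobius_split {τ : Type*} [Fintype τ] {d : τ → ℕ}
    (p : (∀ v, Fin (d v)) → ℝ) (A : Finset τ) (j : ∀ v, Fin (d v)) (v : τ) (hv : v ∈ A) :
    satMobius p (A.erase v) j = ∑ x, satMobius p A (Function.update j v x) := by
  unfold satMobius
  rw [← Finset.sum_fiberwise _ (fun k : ∀ v, Fin (d v) => k v)]
  refine Finset.sum_congr rfl fun x _ => ?_
  refine Finset.sum_congr ?_ fun _ _ => rfl
  ext k
  simp only [Finset.mem_filter, Finset.mem_univ, true_and, Finset.mem_erase]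
  constructor
  · rintro ⟨h, rfl⟩ w hw
    by_cases hwv : w = v
    · subst hwv; simp
    · rw [Function.update_of_ne hwv]; exact h w ⟨hwv, hw⟩
  · intro h
    refine ⟨fun w hw => ?_, ?_⟩
    · have := h w hw.2
      rwa [Function.update_of_ne hw.1] at this
    · simpa using h v hv

/-- part of Lemma 7: two pmfs on `I_τ` whose saturated Möbius parameters
agree (for every `σ ⊆ τ` and every `j_σ ∈ J_σ`, i.e. every state vector whose coordinates
on `σ` lie in the reduced ranges) are equal. -/
theorem mobius_parameters_injective {τ : Type*} [Fintype τ] (d : τ → ℕ)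
    (hd : ∀ v, 1 ≤ d v)
    (p p' : (∀ v, Fin (d v)) → ℝ)
    (hp0 : ∀ i, 0 ≤ p i) (hp1 : ∑ i, p i = 1)
    (hp0' : ∀ i, 0 ≤ p' i) (hp1' : ∑ i, p' i = 1)
    (hq : ∀ (σ : Finset τ) (j : ∀ v, Fin (d v)),
      (∀ v ∈ σ, (j v : ℕ) + 1 < d v) → satMobius p σ j = satMobius p' σ j) :
    p = p' := by
  have key : ∀ (n : ℕ) (A : Finset τ) (j : ∀ v, Fin (d v)),
      (A.filter (fun v => ¬ ((j v : ℕ) + 1 < d v))).card = n →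
      satMobius p A j = satMobius p' A j := by
    intro n
    induction n with
    | zero =>
      intro A j h
      refine hq A j fun v hv => ?_
      by_contra hc
      rw [Finset.card_eq_zero] at h
      exact Finset.notMem_empty v (h ▸ Finset.mem_filter.2 ⟨hv, hc⟩)
    | succ n ih =>
      intro A j h
      obtain ⟨v, hvm⟩ := Finset.card_pos.1 (h.symm ▸ Nat.succ_pos n :
        0 < (A.filter (fun v => ¬ ((j v : ℕ) + 1 < d v))).card)
      obtain ⟨hv, hb⟩ := Finset.mem_filter.1 hvm
      have hcard : ((A.filter (fun v => ¬ ((j v : ℕ) + 1 < d v))).erase v).card = n := by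
        rw [Finset.card_erase_of_mem hvm, h]; rfl
      have h1 : satMobius p (A.erase v) j = satMobius p' (A.erase v) j := by
        apply ih
        rw [← hcard]
        congr 1
        ext w
        simp only [Finset.mem_filter, Finset.mem_erase]
        tauto
      rw [satMobius_split p A j v hv, satMobius_split p' A j v hv,
        ← Finset.add_sum_erase _ _ (Finset.mem_univ (j v)),
        ← Finset.add_sum_erase _ _ (Finset.mem_univ (j v))] at h1
      have h2 : ∑ x ∈ Finset.univ.erase (j v), satMobius p A (Function.update j v x)
          = ∑ x ∈ Finset.univ.erase (j v), satMobius p' A (Function.update j v x) := by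
        refine Finset.sum_congr rfl fun x hx => ?_
        have hx' : (x : ℕ) ≠ (j v : ℕ) := fun e => (Finset.mem_erase.1 hx).1 (Fin.ext e)
        have hxd := x.isLt
        have hjd := (j v).isLt
        apply ih
        rw [← hcard]
        congr 1
        ext w
        simp only [Finset.mem_filter, Finset.mem_erase]
        by_cases hwv : w = v
        · subst hwv
          simp only [Function.update_self, ne_eq, not_true_eq_false, false_and, iff_false]
          rintro ⟨_, h3⟩
          omega
        · rw [Function.update_of_ne hwv]
          tauto
      rw [h2] at h1
      have h4 := add_right_cancel h1
      rwa [Function.update_eq_self] at h4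
  funext i
  have h := key _ Finset.univ i rfl
  have hf : Finset.univ.filter
      (fun k : ∀ v, Fin (d v) => ∀ v ∈ (Finset.univ : Finset τ), k v = i v) = {i} := by
    ext k
    simp [funext_iff]
  unfold satMobius at h
  rw [hf] at h
  simpa using h
end

section
/- Let τ be a finite index set with d_v ≥ 1 for v ∈ τ, let π be a finite index set with finite state spaces I_π, and let Pa : τ → Finset(π) be a parent assignment. Let C be the set of families P = (P_{i_π})_{i_π ∈ I_π} of strictly positive pmfs on I_τ such that for every nonempty σ ⊆ τ, every j_σ ∈ J_σ, and every pair i_π, k_π ∈ I_π with i_{Pa(σ)} = k_{Pa(σ)}: ∑_{i_τ : (i_τ)_σ = j_σ} P_{i_π}(i_τ) = ∑_{i_τ : (i_τ)_σ = j_σ} P_{k_π}(i_τ). Let n : I_τ × I_π → ℕ be counts with n(i_τ, i_π) > 0 for all (i_τ, i_π), and define the component log-likelihood ℓ(P) = ∑_{i_τ, i_π} n(i_τ, i_π) · log P_{i_π}(i_τ). Then ℓ attains a maximum on C at a unique point, and this point is the unique local maximum of ℓ on C (with respect to the subspace topology on C ⊆ ℝ^{I_τ × I_π}). (Theorem 13,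 stated for a complete chain component τ: completeness makes all subsets of τ connected and condition (ii) vacuous, so the constraint set is exactly condition (iii) over all nonempty σ ⊆ τ.) -/
open Finset
open scoped Classical

section

variable {τ π : Type*} [Fintype τ] [Fintype π] {d : τ → ℕ} {e : π → ℕ}

/-- The constraint set `C` of Theorem 13 (for a complete chain component): families
`P = (P_{i_π})_{i_π}` of strictly positive pmfs on `I_τ` such that for every nonempty
`σ ⊆ τ`, every `j_σ ∈ J_σ` and every pair of conditioning states agreeing on `Pa(σ)`,
the marginal probabilities `q(j_σ | ·)` agree (condition (iii) of Theorem 8). -/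
def constraintSet (d : τ → ℕ) (e : π → ℕ) (Pa : τ → Finset π) :
    Set ((∀ u, Fin (e u)) → (∀ v, Fin (d v)) → ℝ) :=
  {P | (∀ (c : ∀ u, Fin (e u)) (i : ∀ v, Fin (d v)), 0 < P c i) ∧
       (∀ c : ∀ u, Fin (e u), ∑ i : ∀ v, Fin (d v), P c i = 1) ∧
       (∀ σ : Finset τ, σ.Nonempty →
         ∀ j : ∀ v, Fin (d v), (∀ v ∈ σ, (j v : ℕ) + 1 < d v) →
           ∀ c k : ∀ u, Fin (e u), (∀ u ∈ σ.biUnion Pa, c u = k u) →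
             (∑ i ∈ Finset.univ.filter
                 (fun i : ∀ v, Fin (d v) => ∀ v ∈ σ, i v = j v), P c i)
               = ∑ i ∈ Finset.univ.filter
                   (fun i : ∀ v, Fin (d v) => ∀ v ∈ σ, i v = j v), P k i)}

/-- The component log-likelihood function `ℓ(P) = ∑ n(i_τ, i_π) log P_{i_π}(i_τ)`. -/
noncomputable def loglik (n : ((∀ v, Fin (d v)) × (∀ u, Fin (e u))) → ℕ)
    (P : (∀ u, Fin (e u)) → (∀ v, Fin (d v)) → ℝ) : ℝ :=
  ∑ s : (∀ v, Fin (d v)) × (∀ u, Fin (e u)), (n s : ℝ) * Real.log (P s.2 s.1)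

lemma convex_constraintSet (Pa : τ → Finset π) : Convex ℝ (constraintSet d e Pa) := by
  rintro P ⟨h1, h2, h3⟩ Q ⟨g1, g2, g3⟩ a b ha hb hab
  refine ⟨fun c i => ?_, fun c => ?_, fun σ hσ j hj c k hck => ?_⟩
  · have := h1 c i
    have := g1 c i
    simp only [Pi.add_apply, Pi.smul_apply, smul_eq_mul]
    rcases ha.eq_or_lt with rfl | ha
    · have : b = 1 := by linarith
      subst this; simpa
    · have := mul_pos ha (h1 c i)
      have := mul_nonneg hb (g1 c i).le
      linarith
  · simp only [Pi.add_apply, Pi.smul_apply, smul_eq_mul, Finset.sum_add_distrib,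
      ← Finset.mul_sum, h2, g2]
    linarith
  · simp only [Pi.add_apply, Pi.smul_apply, smul_eq_mul, Finset.sum_add_distrib,
      ← Finset.mul_sum]
    rw [h3 σ hσ j hj c k hck, g3 σ hσ j hj c k hck]

lemma strictConcaveOn_loglik (Pa : τ → Finset π)
    (n : ((∀ v, Fin (d v)) × (∀ u, Fin (e u))) → ℕ) (hn : ∀ s, 0 < n s) :
    StrictConcaveOn ℝ (constraintSet d e Pa) (loglik n) := by
  refine ⟨convex_constraintSet Pa, ?_⟩
  rintro P hP Q hQ hne a b ha hb hab
  have hs : ∃ c i, P c i ≠ Q c i := by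
    by_contra! h
    exact hne (funext fun c => funext fun i => h c i)
  obtain ⟨c, i, hci⟩ := hs
  simp only [loglik, smul_eq_mul, Finset.mul_sum, ← Finset.sum_add_distrib,
    Pi.add_apply, Pi.smul_apply]
  apply Finset.sum_lt_sum
  · intro s _
    have h := strictConcaveOn_log_Ioi.concaveOn.2 (hP.1 s.2 s.1) (hQ.1 s.2 s.1) ha.le hb.le hab
    simp only [smul_eq_mul] at h
    have := mul_le_mul_of_nonneg_left h (Nat.cast_nonneg (α := ℝ) (n s))
    linarith
  · refine ⟨(i, c), Finset.mem_univ _, ?_⟩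
    have h := strictConcaveOn_log_Ioi.2 (hP.1 c i) (hQ.1 c i) hci ha hb hab
    simp only [smul_eq_mul] at h
    have := mul_lt_mul_of_pos_left h (Nat.cast_pos (α := ℝ).2 (hn (i, c)))
    simp only
    linarith

lemma le_one_of_mem {Pa : τ → Finset π} {P} (hP : P ∈ constraintSet d e Pa) (c i) :
    P c i ≤ 1 := by
  rw [← hP.2.1 c]
  exact Finset.single_le_sum (f := P c) (fun i _ => (hP.1 c i).le) (Finset.mem_univ i)

lemma loglik_le_log {Pa : τ → Finset π}
    (n : ((∀ v, Fin (d v)) × (∀ u, Fin (e u))) → ℕ) (hn : ∀ s, 0 < n s)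
    {P} (hP : P ∈ constraintSet d e Pa) (c i) : loglik n P ≤ Real.log (P c i) := by
  have hlog : ∀ c i, Real.log (P c i) ≤ 0 := fun c i =>
    Real.log_nonpos (hP.1 c i).le (le_one_of_mem hP c i)
  have h1 : loglik n P ≤ (n (i, c) : ℝ) * Real.log (P c i) := by
    unfold loglik
    rw [← Finset.add_sum_erase _ _ (Finset.mem_univ (i, c))]
    have : ∑ s ∈ Finset.univ.erase (i, c), (n s : ℝ) * Real.log (P s.2 s.1) ≤ 0 :=
      Finset.sum_nonpos fun s _ =>
        mul_nonpos_of_nonneg_of_nonpos (Nat.cast_nonneg _) (hlog _ _)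
    simp only
    linarith
  have h2 : (1 : ℝ) ≤ n (i, c) := by exact_mod_cast hn (i, c)
  have := hlog c i
  nlinarith

lemma exists_loglik_max (Pa : τ → Finset π) (hd : ∀ v, 1 ≤ d v)
    (n : ((∀ v, Fin (d v)) × (∀ u, Fin (e u))) → ℕ) (hn : ∀ s, 0 < n s) :
    ∃ x ∈ constraintSet d e Pa, IsMaxOn (loglik n) (constraintSet d e Pa) x := by
  have : Nonempty (∀ v, Fin (d v)) := ⟨fun v => ⟨0, hd v⟩⟩
  let U : (∀ u, Fin (e u)) → (∀ v, Fin (d v)) → ℝ :=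
    fun _ _ => (Fintype.card (∀ v, Fin (d v)) : ℝ)⁻¹
  have hcard : (0 : ℝ) < Fintype.card (∀ v, Fin (d v)) := Nat.cast_pos.2 Fintype.card_pos
  have hU : U ∈ constraintSet d e Pa := by
    refine ⟨fun c i => inv_pos.2 hcard, fun c => ?_, fun σ hσ j hj c k hck => rfl⟩
    simp only [U, Finset.sum_const, Finset.card_univ, nsmul_eq_mul]
    exact mul_inv_cancel₀ hcard.ne'
  set ε := Real.exp (loglik n U) with hε
  have hεpos : 0 < ε := Real.exp_pos _
  let K := {P ∈ constraintSet d e Pa | ∀ c i, ε ≤ P c i}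
  have hge : ∀ P ∈ constraintSet d e Pa, loglik n U ≤ loglik n P → P ∈ K := by
    intro P hP h
    refine ⟨hP, fun c i => ?_⟩
    rw [hε, ← Real.le_log_iff_exp_le (hP.1 c i)]
    exact h.trans (loglik_le_log n hn hP c i)
  have hKeq : K = {P | (∀ c i, ε ≤ P c i) ∧ (∀ c, ∑ i, P c i = 1) ∧
       (∀ σ : Finset τ, σ.Nonempty →
         ∀ j : ∀ v, Fin (d v), (∀ v ∈ σ, (j v : ℕ) + 1 < d v) →
           ∀ c k : ∀ u, Fin (e u), (∀ u ∈ σ.biUnion Pa, c u = k u) →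
             (∑ i ∈ Finset.univ.filter
                 (fun i : ∀ v, Fin (d v) => ∀ v ∈ σ, i v = j v), P c i)
               = ∑ i ∈ Finset.univ.filter
                   (fun i : ∀ v, Fin (d v) => ∀ v ∈ σ, i v = j v), P k i)} := by
    ext P
    constructor
    · rintro ⟨⟨_, h2, h3⟩, h4⟩
      exact ⟨h4, h2, h3⟩
    · rintro ⟨h4, h2, h3⟩
      exact ⟨⟨fun c i => hεpos.trans_le (h4 c i), h2, h3⟩, h4⟩
  have hclosed : IsClosed K := by
    rw [hKeq]
    simp only [Set.setOf_and, Set.setOf_forall]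
    refine IsClosed.inter ?_ (IsClosed.inter ?_ ?_)
    · exact isClosed_iInter fun c => isClosed_iInter fun i =>
        isClosed_le (by fun_prop) (by fun_prop)
    · exact isClosed_iInter fun c => isClosed_eq (by fun_prop) (by fun_prop)
    · exact isClosed_iInter fun σ => isClosed_iInter fun _ => isClosed_iInter fun j =>
        isClosed_iInter fun _ => isClosed_iInter fun c => isClosed_iInter fun k =>
        isClosed_iInter fun _ => isClosed_eq (by fun_prop) (by fun_prop)
  have hcompact : IsCompact K := by
    have hbox : IsCompact (Set.Icc (0 : (∀ u, Fin (e u)) → (∀ v, Fin (d v)) → ℝ) 1) :=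
      isCompact_Icc
    refine hbox.of_isClosed_subset hclosed ?_
    rintro P ⟨hP, _⟩
    exact ⟨fun c i => (hP.1 c i).le, fun c i => le_one_of_mem hP c i⟩
  have hcont : ContinuousOn (loglik n) K := by
    unfold loglik
    refine continuousOn_finset_sum _ fun s _ => continuousOn_const.mul ?_
    refine ContinuousOn.log (by fun_prop) ?_
    rintro P ⟨hP, _⟩
    exact (hP.1 _ _).ne'
  obtain ⟨x, hxK, hx⟩ := hcompact.exists_isMaxOn ⟨U, hge U hU le_rfl⟩ hcont
  refine ⟨x, hxK.1, fun P hP => ?_⟩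
  rcases le_total (loglik n U) (loglik n P) with h | h
  · exact hx (hge P hP h)
  · exact h.trans (hx (hge U hU le_rfl))

/-- Theorem 13, for a complete chain component: if all counts are positive,
the component log-likelihood attains its maximum on the constraint set `C` at a point
which is the unique local maximum of `ℓ` on `C` (in the subspace topology). -/
theorem loglik_unique_local_max (Pa : τ → Finset π)
    (hd : ∀ v, 1 ≤ d v)
    (n : ((∀ v, Fin (d v)) × (∀ u, Fin (e u))) → ℕ)
    (hn : ∀ s, 0 < n s) :
    ∃ x ∈ constraintSet d e Pa,
      IsMaxOn (loglik n) (constraintSet d e Pa) x ∧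
      ∀ y ∈ constraintSet d e Pa,
        IsLocalMaxOn (loglik n) (constraintSet d e Pa) y → y = x := by
  obtain ⟨x, hxC, hx⟩ := exists_loglik_max Pa hd n hn
  have hc := strictConcaveOn_loglik Pa n hn
  refine ⟨x, hxC, hx, fun y hy hloc => ?_⟩
  exact hc.eq_of_isMaxOn (IsMaxOn.of_isLocalMaxOn_of_concaveOn hy hloc hc.concaveOn) hx hy hxC

end
end

section
/- Let d_1, d_2, d_3, d_4 ≥ 2 and let p be a positive pmf on {1,…,d_1} × {1,…,d_2} × {1,…,d_3} × {1,…,d_4} (a random vector (X1,X2,X3,X4)) satisfying (X2,X4) ⊥ X1. Define, for i_1 ∈ [d_1]: q_3(i_3|i_1) = P(X3=i_3 | X1=i_1), q_{23}(i_2,i_3|i_1) = P(X2=i_2, X3=i_3 | X1=i_1), q_{34}(i_3,i_4|i_1) = P(X3=i_3, X4=i_4 | X1=i_1), q_{234}(i_2,i_3,i_4|i_1) = P(X2=i_2, X3=i_3, X4=i_4 | X1=i_1), and the marginals q_2(i_2)=P(X2=i_2), q_4(i_4)=P(X4=i_4), q_{24}(i_2,i_4)=P(X2=i_2, X4=i_4).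 For i_1 ∈ [d_1] and i_3 ∈ [d_3 − 1], let Q^{(i_1,i_3)} be the d_2 × d_4 matrix with (i_2,i_4) entry: q_{234}(i_2,i_3,i_4|i_1) if i_2 < d_2 and i_4 < d_4; q_{23}(i_2,i_3|i_1) if i_2 < d_2 and i_4 = d_4; q_{34}(i_3,i_4|i_1) if i_2 = d_2 and i_4 < d_4; q_3(i_3|i_1) if i_2 = d_2 and i_4 = d_4. For i_3 = d_3, let Q^{(i_1,d_3)} be the d_2 × d_4 matrix with (i_2,i_4) entry: q_{24}(i_2,i_4) − ∑_{k=1}^{d_3−1} q_{234}(i_2,k,i_4|i_1) if i_2 < d_2 and i_4 < d_4; q_2(i_2) − ∑_{k=1}^{d_3−1} q_{23}(i_2,k|i_1) if i_2 < d_2 and i_4 = d_4; q_4(i_4) − ∑_{k=1}^{d_3−1} q_{34}(k,i_4|i_1) if i_2 = d_2 and i_4 < d_4; 1 − ∑_{k=1}^{d_3−1} q_3(k|i_1) if i_2 = d_2 and i_4 = d_4. Then X2 ⊥ X4 | (X1,X3) if and only if for all i_1 ∈ [d_1] and i_3 ∈ [d_3], the matrix Q^{(i_1,i_3)} has rank at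 most one. (Proposition 14.) -/
open Finset

section

variable {d1 d2 d3 d4 : ℕ}

/-- `p₁(i₁) = P(X1 = i₁)`. -/
noncomputable def pm1 (p : Fin d1 × Fin d2 × Fin d3 × Fin d4 → ℝ) (i1 : Fin d1) : ℝ :=
  ∑ i2, ∑ i3, ∑ i4, p (i1, i2, i3, i4)

/-- `q₃(i₃ | i₁) = P(X3 = i₃ | X1 = i₁)`. -/
noncomputable def q3 (p : Fin d1 × Fin d2 × Fin d3 × Fin d4 → ℝ)
    (i3 : Fin d3) (i1 : Fin d1) : ℝ :=
  (∑ i2, ∑ i4, p (i1, i2, i3, i4)) / pm1 p i1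

/-- `q₂₃(i₂, i₃ | i₁) = P(X2 = i₂, X3 = i₃ | X1 = i₁)`. -/
noncomputable def q23 (p : Fin d1 × Fin d2 × Fin d3 × Fin d4 → ℝ)
    (i2 : Fin d2) (i3 : Fin d3) (i1 : Fin d1) : ℝ :=
  (∑ i4, p (i1, i2, i3, i4)) / pm1 p i1

/-- `q₃₄(i₃, i₄ | i₁) = P(X3 = i₃, X4 = i₄ | X1 = i₁)`. -/
noncomputable def q34 (p : Fin d1 × Fin d2 × Fin d3 × Fin d4 → ℝ)
    (i3 : Fin d3) (i4 : Fin d4) (i1 : Fin d1) : ℝ :=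
  (∑ i2, p (i1, i2, i3, i4)) / pm1 p i1

/-- `q₂₃₄(i₂, i₃, i₄ | i₁) = P(X2 = i₂, X3 = i₃, X4 = i₄ | X1 = i₁)`. -/
noncomputable def q234 (p : Fin d1 × Fin d2 × Fin d3 × Fin d4 → ℝ)
    (i2 : Fin d2) (i3 : Fin d3) (i4 : Fin d4) (i1 : Fin d1) : ℝ :=
  p (i1, i2, i3, i4) / pm1 p i1

/-- `q₂(i₂) = P(X2 = i₂)`. -/
noncomputable def q2 (p : Fin d1 × Fin d2 × Fin d3 × Fin d4 → ℝ) (i2 : Fin d2) : ℝ :=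
  ∑ i1, ∑ i3, ∑ i4, p (i1, i2, i3, i4)

/-- `q₄(i₄) = P(X4 = i₄)`. -/
noncomputable def q4 (p : Fin d1 × Fin d2 × Fin d3 × Fin d4 → ℝ) (i4 : Fin d4) : ℝ :=
  ∑ i1, ∑ i2, ∑ i3, p (i1, i2, i3, i4)

/-- `q₂₄(i₂, i₄) = P(X2 = i₂, X4 = i₄)`. -/
noncomputable def q24 (p : Fin d1 × Fin d2 × Fin d3 × Fin d4 → ℝ)
    (i2 : Fin d2) (i4 : Fin d4) : ℝ :=
  ∑ i1, ∑ i3, p (i1, i2, i3, i4)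

/-- The matrix `Q^{(i₁, i₃)}` of (5.3)/(5.4).  States are `0`-based: a coordinate `i` of
`Fin d` lies in the reduced range `[d − 1]` iff `(i : ℕ) + 1 < d`, and equals the highest
state `d` iff `¬((i : ℕ) + 1 < d)`. -/
noncomputable def Qmat (p : Fin d1 × Fin d2 × Fin d3 × Fin d4 → ℝ)
    (i1 : Fin d1) (i3 : Fin d3) : Matrix (Fin d2) (Fin d4) ℝ :=
  fun i2 i4 =>
    if (i3 : ℕ) + 1 < d3 then
      if (i2 : ℕ) + 1 < d2 then
        if (i4 : ℕ) + 1 < d4 then q234 p i2 i3 i4 i1 else q23 p i2 i3 i1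
      else
        if (i4 : ℕ) + 1 < d4 then q34 p i3 i4 i1 else q3 p i3 i1
    else
      if (i2 : ℕ) + 1 < d2 then
        if (i4 : ℕ) + 1 < d4 then
          q24 p i2 i4 - ∑ k ∈ Finset.univ.filter (fun k : Fin d3 => (k : ℕ) + 1 < d3),
            q234 p i2 k i4 i1
        else
          q2 p i2 - ∑ k ∈ Finset.univ.filter (fun k : Fin d3 => (k : ℕ) + 1 < d3),
            q23 p i2 k i1
      else
        if (i4 : ℕ) + 1 < d4 then
          q4 p i4 - ∑ k ∈ Finset.univ.filter (fun k : Fin d3 => (k : ℕ) + 1 < d3),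
            q34 p k i4 i1
        else
          1 - ∑ k ∈ Finset.univ.filter (fun k : Fin d3 => (k : ℕ) + 1 < d3), q3 p k i1

/-- The bordered matrix: the last column/row replaced by row/column sums. -/
theorem border_aux {m n : Type*} [Fintype m] [Fintype n] [DecidableEq m] [DecidableEq n]
    (l : m) (k : n) (f : m → n → ℝ) (hT : (∑ i, ∑ j, f i j) ≠ 0) :
    (∀ i j, f i j * (∑ i', ∑ j', f i' j') = (∑ j', f i j') * (∑ i', f i' j)) ↔
    (∀ i j, i ≠ l → j ≠ k →
      f i j * (∑ i', ∑ j', f i' j') = (∑ j', f i j') * (∑ i', f i' j)) := by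
  refine ⟨fun h i j _ _ => h i j, fun h => ?_⟩
  set T := ∑ i', ∑ j', f i' j' with hTdef
  set g : m → n → ℝ := fun i j => f i j * T - (∑ j', f i j') * (∑ i', f i' j) with hg
  have hrow : ∀ i, ∑ j, g i j = 0 := by
    intro i
    simp only [hg, Finset.sum_sub_distrib, ← Finset.sum_mul, ← Finset.mul_sum]
    rw [Finset.sum_comm (f := fun j i' => f i' j)]
    ring
  have hcol : ∀ j, ∑ i, g i j = 0 := by
    intro j
    simp only [hg, Finset.sum_sub_distrib, ← Finset.sum_mul, ← Finset.mul_sum]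
    ring
  have h0 : ∀ i j, i ≠ l → j ≠ k → g i j = 0 := fun i j hi hj => sub_eq_zero.2 (h i j hi hj)
  have h1 : ∀ i j, i ≠ l → g i j = 0 := by
    intro i j hi
    by_cases hj : j = k
    · subst hj
      have := hrow i
      rwa [Finset.sum_eq_single j (fun b _ hb => h0 i b hi hb) (by simp)] at this
    · exact h0 i j hi hj
  have h2 : ∀ i j, g i j = 0 := by
    intro i j
    by_cases hi : i = l
    · subst hi
      have := hcol j
      rwa [Finset.sum_eq_single i (fun b _ hb => h1 b j hb) (by simp)] at this
    · exact h1 i j hi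
  exact fun i j => sub_eq_zero.1 (h2 i j)

theorem rank_le_one_iff_pivot {m n : Type*} [Fintype m] [Fintype n]
    (l : m) (k : n) (B : Matrix m n ℝ) (hB : B l k ≠ 0) :
    B.rank ≤ 1 ↔ ∀ i j, B i j * B l k = B i k * B l j := by
  constructor
  · intro h i j
    by_contra hne
    have hdet : (B.submatrix ![i, l] ![j, k]).det ≠ 0 := by
      rw [Matrix.det_fin_two]
      simpa using sub_ne_zero.2 hne
    have hr : (B.submatrix ![i, l] ![j, k]).rank = 2 := by
      rw [Matrix.rank_of_isUnit _ ((Matrix.isUnit_iff_isUnit_det _).2 hdet.isUnit)]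
      simp
    have := Matrix.rank_submatrix_le B ![i, l] ![j, k]
    omega
  · intro h
    have : B = Matrix.vecMulVec (fun i => B i k / B l k) (fun j => B l j) := by
      ext i j
      rw [Matrix.vecMulVec_apply, div_mul_eq_mul_div, ← h i j, mul_div_cancel_right₀ _ hB]
    rw [this]
    exact Matrix.rank_vecMulVec_le _ _

theorem border_rank {m n : Type*} [Fintype m] [Fintype n] [DecidableEq m] [DecidableEq n]
    (l : m) (k : n) (f : m → n → ℝ) (hT : (∑ i, ∑ j, f i j) ≠ 0) (c : ℝ) (hc : c ≠ 0)
    (B : Matrix m n ℝ)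
    (hB1 : ∀ i j, i ≠ l → j ≠ k → B i j = f i j / c)
    (hB2 : ∀ i, i ≠ l → B i k = (∑ j, f i j) / c)
    (hB3 : ∀ j, j ≠ k → B l j = (∑ i, f i j) / c)
    (hB4 : B l k = (∑ i, ∑ j, f i j) / c) :
    (∀ i j, f i j * (∑ i', ∑ j', f i' j') = (∑ j', f i j') * (∑ i', f i' j)) ↔
      B.rank ≤ 1 := by
  rw [border_aux l k f hT, rank_le_one_iff_pivot l k B (by rw [hB4]; exact div_ne_zero hT hc)]
  constructor
  · intro h i j
    by_cases hi : i = l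
    · subst hi; ring
    by_cases hj : j = k
    · subst hj; ring
    rw [hB1 i j hi hj, hB2 i hi, hB3 j hj, hB4, div_mul_div_comm, div_mul_div_comm, h i j hi hj]
  · intro h i j hi hj
    have := h i j
    rw [hB1 i j hi hj, hB2 i hi, hB3 j hj, hB4, div_mul_div_comm, div_mul_div_comm] at this
    exact (div_left_inj' (mul_ne_zero hc hc)).1 this

theorem sum_filter_last {d : ℕ} (l : Fin d) (hl : ∀ i : Fin d, (i : ℕ) + 1 < d ↔ i ≠ l)
    (g : Fin d → ℝ) :
    ∑ k ∈ Finset.univ.filter (fun k : Fin d => (k : ℕ) + 1 < d), g k = (∑ k, g k) - g l := by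
  have : Finset.univ.filter (fun k : Fin d => (k : ℕ) + 1 < d) = Finset.univ.erase l := by
    ext k; simp [hl]
  rw [this, Finset.sum_erase_eq_sub (Finset.mem_univ l)]

theorem exists_last {d : ℕ} (h : 2 ≤ d) : ∃ l : Fin d, ∀ i : Fin d, (i : ℕ) + 1 < d ↔ i ≠ l := by
  refine ⟨⟨d - 1, by omega⟩, fun i => ?_⟩
  rw [Ne, Fin.ext_iff]
  have := i.2
  simp only
  omega

/-- Proposition 14: for a positive pmf `p` on `[d₁]×[d₂]×[d₃]×[d₄]` with
`(X2, X4) ⊥ X1`, the conditional independence `X2 ⊥ X4 | (X1, X3)` holds if and only if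
every matrix `Q^{(i₁, i₃)}` has rank at most one. -/
theorem prop14_rank_characterization
    (h1 : 2 ≤ d1) (h2 : 2 ≤ d2) (h3 : 2 ≤ d3) (h4 : 2 ≤ d4)
    (p : Fin d1 × Fin d2 × Fin d3 × Fin d4 → ℝ)
    (hp0 : ∀ s, 0 < p s) (hp1 : ∑ s, p s = 1)
    -- (X2, X4) ⊥ X1 : p₁₂₄(i₁, i₂, i₄) = p₂₄(i₂, i₄) · p₁(i₁)
    (hind : ∀ i1 i2 i4, (∑ i3, p (i1, i2, i3, i4))
        = (∑ i1', ∑ i3, p (i1', i2, i3, i4)) * pm1 p i1) :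
    -- X2 ⊥ X4 | (X1, X3) : p(i) · p₁₃(i₁, i₃) = p₁₂₃(i₁, i₂, i₃) · p₁₃₄(i₁, i₃, i₄)
    (∀ i1 i2 i3 i4, p (i1, i2, i3, i4) * (∑ i2', ∑ i4', p (i1, i2', i3, i4'))
        = (∑ i4', p (i1, i2, i3, i4')) * (∑ i2', p (i1, i2', i3, i4)))
    ↔ (∀ (i1 : Fin d1) (i3 : Fin d3), (Qmat p i1 i3).rank ≤ 1) := by
  haveI : Nonempty (Fin d2) := ⟨⟨0, by omega⟩⟩
  haveI : Nonempty (Fin d3) := ⟨⟨0, by omega⟩⟩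
  haveI : Nonempty (Fin d4) := ⟨⟨0, by omega⟩⟩
  have hpm : ∀ i1, pm1 p i1 ≠ 0 := fun i1 => ne_of_gt <|
    Finset.sum_pos (fun _ _ => Finset.sum_pos (fun _ _ => Finset.sum_pos (fun _ _ => hp0 _)
      Finset.univ_nonempty) Finset.univ_nonempty) Finset.univ_nonempty
  obtain ⟨l2, hl2⟩ := exists_last h2
  obtain ⟨l3, hl3⟩ := exists_last h3
  obtain ⟨l4, hl4⟩ := exists_last h4
  -- the reduced marginals agree with sums of conditional probabilities
  have e24 : ∀ i1 i2 i4, q24 p i2 i4 = ∑ k, q234 p i2 k i4 i1 := by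
    intro i1 i2 i4
    simp only [q234, q24]
    rw [← Finset.sum_div, eq_div_iff (hpm i1), hind i1 i2 i4]
  have e2 : ∀ i1 i2, q2 p i2 = ∑ k, q23 p i2 k i1 := by
    intro i1 i2
    have a : q2 p i2 = ∑ i4, q24 p i2 i4 := by
      simp only [q2, q24]
      symm
      rw [Finset.sum_comm]
      refine Finset.sum_congr rfl fun i _ => ?_
      exact Finset.sum_comm
    have b : ∀ k, q23 p i2 k i1 = ∑ i4, q234 p i2 k i4 i1 := by
      intro k; simp only [q23, q234, Finset.sum_div]
    rw [a, Finset.sum_congr rfl (fun k _ => b k), Finset.sum_comm]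
    exact Finset.sum_congr rfl fun i4 _ => e24 i1 i2 i4
  have e4 : ∀ i1 i4, q4 p i4 = ∑ k, q34 p k i4 i1 := by
    intro i1 i4
    have a : q4 p i4 = ∑ i2, q24 p i2 i4 := by
      simp only [q4, q24]
      rw [Finset.sum_comm]
    have b : ∀ k, q34 p k i4 i1 = ∑ i2, q234 p i2 k i4 i1 := by
      intro k; simp only [q34, q234, Finset.sum_div]
    rw [a, Finset.sum_congr rfl (fun k _ => b k), Finset.sum_comm]
    exact Finset.sum_congr rfl fun i2 _ => e24 i1 i2 i4
  have e0 : ∀ i1, (1 : ℝ) = ∑ k, q3 p k i1 := by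
    intro i1
    simp only [q3]
    rw [← Finset.sum_div, eq_div_iff (hpm i1), one_mul, pm1, Finset.sum_comm]
  have key : ∀ i1 i3, (∀ i2 i4, p (i1, i2, i3, i4) * (∑ i2', ∑ i4', p (i1, i2', i3, i4'))
        = (∑ i4', p (i1, i2, i3, i4')) * (∑ i2', p (i1, i2', i3, i4))) ↔
        (Qmat p i1 i3).rank ≤ 1 := by
    intro i1 i3
    have hT : (∑ i2, ∑ i4, p (i1, i2, i3, i4)) ≠ 0 := ne_of_gt <|
      Finset.sum_pos (fun _ _ => Finset.sum_pos (fun _ _ => hp0 _)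
        Finset.univ_nonempty) Finset.univ_nonempty
    refine border_rank l2 l4 (fun i2 i4 => p (i1, i2, i3, i4)) hT (pm1 p i1) (hpm i1) _
      ?_ ?_ ?_ ?_
    · intro i j hi hj
      simp only [Qmat, hl2, hl3, hl4]
      by_cases h : i3 = l3
      · simp only [← hl3, sum_filter_last l3 hl3, e24 i1]
        simp [hl3, hi, hj, h, q234]
      · simp [hi, hj, h, q234]
    · intro i hi
      simp only [Qmat, hl2, hl3, hl4]
      by_cases h : i3 = l3
      · simp only [← hl3, sum_filter_last l3 hl3, e2 i1]
        simp [hl3, hi, h, q23]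
      · simp [hi, h, q23]
    · intro j hj
      simp only [Qmat, hl2, hl3, hl4]
      by_cases h : i3 = l3
      · simp only [← hl3, sum_filter_last l3 hl3, e4 i1]
        simp [hl3, hj, h, q34]
      · simp [hj, h, q34]
    · simp only [Qmat, hl2, hl3, hl4]
      by_cases h : i3 = l3
      · simp only [← hl3, sum_filter_last l3 hl3]
        simp [hl3, h, q3, ← e0 i1]
        have := e0 i1
        simp only [q3] at this
        rw [← this]; ring
      · simp [h, q3]
  constructor
  · intro h i1 i3
    exact (key i1 i3).1 fun i2 i4 => h i1 i2 i3 i4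
  · intro h i1 i2 i3 i4
    exact (key i1 i3).2 (h i1 i3) i2 i4

end
end

section
/- Let p = (p_{ijkl})_{i,j,k,l ∈ {1,2}} be a strictly positive pmf on {1,2}^4 (four binary variables X1, X2, X3, X4, with p_{ijkl} = P(X1=i, X2=j, X3=k, X4=l)). Then the two conditional independences X2 ⊥ X4 | X1 and X1 ⊥ (X2,X4) | X3 hold if and only if at least one of the following two conditions is met: (i) X1 ⊥ (X2,X3,X4) and X2 ⊥ (X1,X4); or (ii) X2 ⊥ X4 | X1 and X1 ⊥ (X2,X4) | X3 and the two equations p_{1121}·p_{2222} − p_{1122}·p_{2221} = p_{1111}·p_{2212} − p_{1112}·p_{2211} and p_{1221}·p_{2122} − p_{1222}·p_{2121} = p_{1211}·p_{2112} − p_{1212}·p_{2111} hold. (Proposition 17: the decomposition of the binary type III chain graph model for the graph with edges 1 → 3, 2 − 3, 3 − 4.) -/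
open Finset

section

/- Four binary variables with states `{1, 2}` encoded as `Fin 2 = {0, 1}`; the state `1`
of the paper is `0` and the state `2` is `1`, so `p_{ijkl} = p (i-1, j-1, k-1, l-1)`. -/

/-- `X2 ⊥ X4 | X1` : `p₁₂₄(i,j,l) · p₁(i) = p₁₂(i,j) · p₁₄(i,l)`. -/
def CI24g1 (p : Fin 2 × Fin 2 × Fin 2 × Fin 2 → ℝ) : Prop :=
  ∀ i j l, (∑ k, p (i, j, k, l)) * (∑ j', ∑ k, ∑ l', p (i, j', k, l'))
    = (∑ k, ∑ l', p (i, j, k, l')) * (∑ j', ∑ k, p (i, j', k, l))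

/-- `X1 ⊥ (X2, X4) | X3` : `p(i,j,k,l) · p₃(k) = p₁₃(i,k) · p₂₃₄(j,k,l)`. -/
def CI1g3 (p : Fin 2 × Fin 2 × Fin 2 × Fin 2 → ℝ) : Prop :=
  ∀ i j k l, p (i, j, k, l) * (∑ i', ∑ j', ∑ l', p (i', j', k, l'))
    = (∑ j', ∑ l', p (i, j', k, l')) * (∑ i', p (i', j, k, l))

/-- `X1 ⊥ (X2, X3, X4)` : `p(i,j,k,l) = p₁(i) · p₂₃₄(j,k,l)`. -/
def Indep1 (p : Fin 2 × Fin 2 × Fin 2 × Fin 2 → ℝ) : Prop :=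
  ∀ i j k l, p (i, j, k, l)
    = (∑ j', ∑ k', ∑ l', p (i, j', k', l')) * (∑ i', p (i', j, k, l))

/-- `X2 ⊥ (X1, X4)` : `p₁₂₄(i,j,l) = p₂(j) · p₁₄(i,l)`. -/
def Indep2 (p : Fin 2 × Fin 2 × Fin 2 × Fin 2 → ℝ) : Prop :=
  ∀ i j l, (∑ k, p (i, j, k, l))
    = (∑ i', ∑ k, ∑ l', p (i', j, k, l')) * (∑ j', ∑ k, p (i, j', k, l))

/-- Equation (6.4): `p₁₁₂₁ p₂₂₂₂ − p₁₁₂₂ p₂₂₂₁ = p₁₁₁₁ p₂₂₁₂ − p₁₁₁₂ p₂₂₁₁`. -/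
def Eq64 (p : Fin 2 × Fin 2 × Fin 2 × Fin 2 → ℝ) : Prop :=
  p (0, 0, 1, 0) * p (1, 1, 1, 1) - p (0, 0, 1, 1) * p (1, 1, 1, 0)
    = p (0, 0, 0, 0) * p (1, 1, 0, 1) - p (0, 0, 0, 1) * p (1, 1, 0, 0)

/-- Equation (6.5): `p₁₂₂₁ p₂₁₂₂ − p₁₂₂₂ p₂₁₂₁ = p₁₂₁₁ p₂₁₁₂ − p₁₂₁₂ p₂₁₁₁`. -/
def Eq65 (p : Fin 2 × Fin 2 × Fin 2 × Fin 2 → ℝ) : Prop :=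
  p (0, 1, 1, 0) * p (1, 0, 1, 1) - p (0, 1, 1, 1) * p (1, 0, 1, 0)
    = p (0, 1, 0, 0) * p (1, 0, 0, 1) - p (0, 1, 0, 1) * p (1, 0, 0, 0)

/-- Proposition 17: for a strictly positive pmf `p` on `{1,2}⁴`, the two
conditional independences `X2 ⊥ X4 | X1` and `X1 ⊥ (X2, X4) | X3` hold if and only if
(i) `X1 ⊥ (X2, X3, X4)` and `X2 ⊥ (X1, X4)`, or
(ii) `X2 ⊥ X4 | X1`, `X1 ⊥ (X2, X4) | X3` and equations (6.4) and (6.5) hold. -/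
theorem prop17 (p : Fin 2 × Fin 2 × Fin 2 × Fin 2 → ℝ)
    (hp0 : ∀ s, 0 < p s) (hp1 : ∑ s, p s = 1) :
    (CI24g1 p ∧ CI1g3 p)
    ↔ ((Indep1 p ∧ Indep2 p) ∨ (CI24g1 p ∧ CI1g3 p ∧ Eq64 p ∧ Eq65 p)) := by
  have hs : ∑ j, ∑ k, ∑ l, (p (0,j,k,l) + p (1,j,k,l)) = 1 := by
    rw [← hp1]; simp only [Fintype.sum_prod_type, Fin.sum_univ_two]; ring
  constructor
  · rintro ⟨h1, h2⟩
    have key : ∀ k, ∃ a : ℝ, 0 < a ∧ a < 1 ∧ ∃ q : Fin 2 → Fin 2 → ℝ,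
        (∀ j l, 0 < q j l) ∧ (∀ j l, p (0,j,k,l) = a * q j l) ∧
        (∀ j l, p (1,j,k,l) = (1 - a) * q j l) := by
      intro k
      have hA : 0 < ∑ j', ∑ l', p (0, j', k, l') := by
        simp only [Fin.sum_univ_two]
        linarith [hp0 (0,0,k,0), hp0 (0,0,k,1), hp0 (0,1,k,0), hp0 (0,1,k,1)]
      have hB : 0 < ∑ j', ∑ l', p (1, j', k, l') := by
        simp only [Fin.sum_univ_two]
        linarith [hp0 (1,0,k,0), hp0 (1,0,k,1), hp0 (1,1,k,0), hp0 (1,1,k,1)]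
      have e0 : ∀ j l, p (0,j,k,l) * ((∑ j', ∑ l', p (0, j', k, l')) + ∑ j', ∑ l', p (1, j', k, l'))
          = (∑ j', ∑ l', p (0, j', k, l')) * (p (0,j,k,l) + p (1,j,k,l)) := by
        intro j l
        have := h2 0 j k l
        rwa [Fin.sum_univ_two, Fin.sum_univ_two (fun i' => p (i', j, k, l))] at this
      generalize (∑ j', ∑ l', p (0, j', k, l')) = A at *
      generalize (∑ j', ∑ l', p (1, j', k, l')) = B at *
      have hAB : 0 < A + B := by linarith
      have e1 : ∀ j l, p (0,j,k,l) = A / (A + B) * (p (0,j,k,l) + p (1,j,k,l)) := by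
        intro j l
        rw [div_mul_eq_mul_div, eq_div_iff hAB.ne']
        exact e0 j l
      refine ⟨A / (A + B), by positivity, (div_lt_one hAB).2 (by linarith),
        fun j l => p (0,j,k,l) + p (1,j,k,l),
        fun j l => add_pos (hp0 _) (hp0 _), e1, ?_⟩
      intro j l
      linear_combination (-1) * e1 j l
    obtain ⟨a, ha0, ha1, q, hq, hq0, hq1⟩ := key 0
    obtain ⟨b, hb0, hb1, r, hr, hr0, hr1⟩ := key 1
    have d0 := h1 0 0 0
    have d1 := h1 1 0 0
    simp only [Fin.sum_univ_two, hq0, hq1, hr0, hr1] at d0 d1 hs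
    have D0 : a^2 * (q 0 0 * q 1 1 - q 0 1 * q 1 0) + b^2 * (r 0 0 * r 1 1 - r 0 1 * r 1 0)
        + a * b * (q 0 0 * r 1 1 + r 0 0 * q 1 1 - q 0 1 * r 1 0 - r 0 1 * q 1 0) = 0 := by
      linear_combination d0
    have D1 : (1-a)^2 * (q 0 0 * q 1 1 - q 0 1 * q 1 0)
        + (1-b)^2 * (r 0 0 * r 1 1 - r 0 1 * r 1 0)
        + (1-a) * (1-b) * (q 0 0 * r 1 1 + r 0 0 * q 1 1 - q 0 1 * r 1 0 - r 0 1 * q 1 0) = 0 := by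
      linear_combination d1
    by_cases hab : a = b
    · left
      subst hab
      have DD : (q 0 0 + r 0 0) * (q 1 1 + r 1 1) - (q 0 1 + r 0 1) * (q 1 0 + r 1 0) = 0 := by
        have : a^2 * ((q 0 0 + r 0 0) * (q 1 1 + r 1 1) - (q 0 1 + r 0 1) * (q 1 0 + r 1 0)) = 0 := by
          linear_combination D0
        exact (mul_eq_zero.1 this).resolve_left (by positivity)
      have hs' : q 0 0 + q 0 1 + q 1 0 + q 1 1 + r 0 0 + r 0 1 + r 1 0 + r 1 1 = 1 := by
        linear_combination hs
      constructor
      · intro i j k l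
        have hA : (∑ j', ∑ k', ∑ l', p (0, j', k', l')) = a := by
          simp only [Fin.sum_univ_two, hq0, hr0]; linear_combination a * hs'
        have hB : (∑ j', ∑ k', ∑ l', p (1, j', k', l')) = 1 - a := by
          simp only [Fin.sum_univ_two, hq1, hr1]; linear_combination (1 - a) * hs'
        rw [Fin.sum_univ_two (fun i' => p (i', j, k, l))]
        match i, k with
        | 0, 0 => rw [hA, hq0, hq1]; ring
        | 0, 1 => rw [hA, hr0, hr1]; ring
        | 1, 0 => rw [hB, hq0, hq1]; ring
        | 1, 1 => rw [hB, hr0, hr1]; ring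
      · intro i j l
        match i, j, l with
        | 0, 0, 0 =>
          simp only [Fin.sum_univ_two, hq0, hq1, hr0, hr1]
          linear_combination a * DD - a * (q 0 0 + r 0 0) * hs'
        | 0, 0, 1 =>
          simp only [Fin.sum_univ_two, hq0, hq1, hr0, hr1]
          linear_combination -a * DD - a * (q 0 1 + r 0 1) * hs'
        | 0, 1, 0 =>
          simp only [Fin.sum_univ_two, hq0, hq1, hr0, hr1]
          linear_combination -a * DD - a * (q 1 0 + r 1 0) * hs'
        | 0, 1, 1 =>
          simp only [Fin.sum_univ_two, hq0, hq1, hr0, hr1]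
          linear_combination a * DD - a * (q 1 1 + r 1 1) * hs'
        | 1, 0, 0 =>
          simp only [Fin.sum_univ_two, hq0, hq1, hr0, hr1]
          linear_combination (1 - a) * DD - (1 - a) * (q 0 0 + r 0 0) * hs'
        | 1, 0, 1 =>
          simp only [Fin.sum_univ_two, hq0, hq1, hr0, hr1]
          linear_combination -(1 - a) * DD - (1 - a) * (q 0 1 + r 0 1) * hs'
        | 1, 1, 0 =>
          simp only [Fin.sum_univ_two, hq0, hq1, hr0, hr1]
          linear_combination -(1 - a) * DD - (1 - a) * (q 1 0 + r 1 0) * hs'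
        | 1, 1, 1 =>
          simp only [Fin.sum_univ_two, hq0, hq1, hr0, hr1]
          linear_combination (1 - a) * DD - (1 - a) * (q 1 1 + r 1 1) * hs'
    · right
      have E : a * (1 - a) * (q 0 0 * q 1 1 - q 0 1 * q 1 0)
          - b * (1 - b) * (r 0 0 * r 1 1 - r 0 1 * r 1 0) = 0 := by
        have : (a - b) * (a * (1 - a) * (q 0 0 * q 1 1 - q 0 1 * q 1 0)
          - b * (1 - b) * (r 0 0 * r 1 1 - r 0 1 * r 1 0)) = 0 := by
          linear_combination (1 - a) * (1 - b) * D0 - a * b * D1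
        exact (mul_eq_zero.1 this).resolve_left (sub_ne_zero.2 hab)
      refine ⟨h1, h2, ?_, ?_⟩
      · simp only [Eq64, hq0, hq1, hr0, hr1]
        linear_combination -E
      · simp only [Eq65, hq0, hq1, hr0, hr1]
        linear_combination E
  · rintro (⟨h1, h2⟩ | ⟨h1, h2, -, -⟩)
    · constructor
      · intro i j l
        have hm : (∑ k, ∑ l', p (i, j, k, l')) = (∑ i', ∑ k, ∑ l', p (i', j, k, l')) *
            (∑ j', ∑ k, ∑ l', p (i, j', k, l')) := by
          have x0 := h2 i j 0
          have x1 := h2 i j 1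
          generalize (∑ i', ∑ k, ∑ l', p (i', j, k, l')) = c at *
          simp only [Fin.sum_univ_two] at *
          linear_combination x0 + x1
        rw [hm, h2 i j l]; ring
      · intro i j k l
        have hm : (∑ j', ∑ l', p (i, j', k, l')) = (∑ j', ∑ k', ∑ l', p (i, j', k', l')) *
            (∑ i', ∑ j', ∑ l', p (i', j', k, l')) := by
          have x0 := h1 i 0 k 0
          have x1 := h1 i 0 k 1
          have x2 := h1 i 1 k 0
          have x3 := h1 i 1 k 1
          generalize (∑ j', ∑ k', ∑ l', p (i, j', k', l')) = c at *
          simp only [Fin.sum_univ_two] at *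
          linear_combination x0 + x1 + x2 + x3
        have x := h1 i j k l
        rw [hm]
        linear_combination (∑ i', ∑ j', ∑ l', p (i', j', k, l')) * x
    · exact ⟨h1, h2⟩


end
end

section
/- Let A_1, A_2, A_3, A_4 be finite nonempty types and let p be a pmf on A_1 × A_2 × A_3 × A_4 (a random vector (X1, X2, X3, X4)). If X1 ⊥ (X2,X3,X4) and X2 ⊥ (X1,X4), then X2 ⊥ X4 | X1 and X1 ⊥ (X2,X4) | X3. (The easy direction of Proposition 17: condition (i) implies membership in the type III model for the chain graph with edges 1 → 3, 2 − 3, 3 − 4.) -/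
/-- easy direction of Proposition 17: for a pmf `p` on
`A₁ × A₂ × A₃ × A₄`, if `X1 ⊥ (X2, X3, X4)` and `X2 ⊥ (X1, X4)`, then
`X2 ⊥ X4 | X1` and `X1 ⊥ (X2, X4) | X3`. -/
theorem prop17_easy_direction
    {A1 A2 A3 A4 : Type*} [Fintype A1] [Fintype A2] [Fintype A3] [Fintype A4]
    [Nonempty A1] [Nonempty A2] [Nonempty A3] [Nonempty A4]
    (p : A1 × A2 × A3 × A4 → ℝ)
    (hp0 : ∀ s, 0 ≤ p s) (hp1 : ∑ s, p s = 1)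
    -- X1 ⊥ (X2, X3, X4) : p(i,j,k,l) = p₁(i) · p₂₃₄(j,k,l)
    (h1 : ∀ i j k l, p (i, j, k, l)
      = (∑ j', ∑ k', ∑ l', p (i, j', k', l')) * (∑ i', p (i', j, k, l)))
    -- X2 ⊥ (X1, X4) : p₁₂₄(i,j,l) = p₂(j) · p₁₄(i,l)
    (h2 : ∀ i j l, (∑ k, p (i, j, k, l))
      = (∑ i', ∑ k, ∑ l', p (i', j, k, l')) * (∑ j', ∑ k, p (i, j', k, l))) :
    -- X2 ⊥ X4 | X1 : p₁₂₄(i,j,l) · p₁(i) = p₁₂(i,j) · p₁₄(i,l)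
    (∀ i j l, (∑ k, p (i, j, k, l)) * (∑ j', ∑ k, ∑ l', p (i, j', k, l'))
      = (∑ k, ∑ l', p (i, j, k, l')) * (∑ j', ∑ k, p (i, j', k, l)))
    -- and X1 ⊥ (X2, X4) | X3 : p(i,j,k,l) · p₃(k) = p₁₃(i,k) · p₂₃₄(j,k,l)
    ∧ (∀ i j k l, p (i, j, k, l) * (∑ i', ∑ j', ∑ l', p (i', j', k, l'))
      = (∑ j', ∑ l', p (i, j', k, l')) * (∑ i', p (i', j, k, l))) := by
  constructor
  · intro i j l
    have e1 : (∑ j', ∑ k, ∑ l', p (i, j', k, l')) = ∑ l', ∑ j', ∑ k, p (i, j', k, l') := by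
      rw [Finset.sum_comm (s := (Finset.univ : Finset A4))]
      exact Finset.sum_congr rfl fun j' _ => Finset.sum_comm
    have e2 : (∑ k, ∑ l', p (i, j, k, l'))
        = (∑ i', ∑ k, ∑ l', p (i', j, k, l')) * (∑ j', ∑ k, ∑ l', p (i, j', k, l')) := by
      rw [Finset.sum_comm, Finset.sum_congr rfl fun l' _ => h2 i j l', ← Finset.mul_sum, e1]
    rw [e2, h2 i j l]
    ring
  · intro i j k l
    have e3 : (∑ i', ∑ j', ∑ l', p (i', j', k, l')) = ∑ j', ∑ l', ∑ i', p (i', j', k, l') := by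
      rw [Finset.sum_comm]
      exact Finset.sum_congr rfl fun j' _ => Finset.sum_comm
    have e4 : (∑ j', ∑ l', p (i, j', k, l'))
        = (∑ j', ∑ k', ∑ l', p (i, j', k', l')) * (∑ i', ∑ j', ∑ l', p (i', j', k, l')) := by
      rw [e3, Finset.mul_sum]
      refine Finset.sum_congr rfl fun j' _ => ?_
      rw [Finset.mul_sum]
      exact Finset.sum_congr rfl fun l' _ => h1 i j' k l'
    rw [e4, h1 i j k l]
    ring
end
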